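/- Let K ⊂ R^n (n ≥ 3) be a convex body with a fixed interior point O. Suppose that for every hyperplane Λ through O there exists a line L_Λ such that Λ ∩ bd K is contained in the shadow boundary of K in the direction L_Λ. Then K is an ellipsoid. -/

import Mathlib

open Set Metric Function Bornology
open scoped RealInnerProductSpace Pointwise

noncomputable section

/-- The cone generated by `K` with apex `x`: `{x + t • (w - x) : w ∈ K, t ≥ 0}`. -/
def cone {n : ℕ} (K : Set (EuclideanSpace ℝ (Fin n))) (x : EuclideanSpace ℝ (Fin n)) :
    Set (EuclideanSpace ℝ (Fin n)) :=
  {p | ∃ w ∈ K, ∃ t : ℝ, 0 ≤ t ∧ p = x + t • (w - x)}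

/-- The support cone `S(K,x)`: the boundary of the cone generated by `K` with apex `x`. -/
def supportCone {n : ℕ} (K : Set (EuclideanSpace ℝ (Fin n))) (x : EuclideanSpace ℝ (Fin n)) :
    Set (EuclideanSpace ℝ (Fin n)) :=
  frontier (cone K x)

/-- A convex body: compact, convex, with nonempty interior. -/
def IsConvexBody {n : ℕ} (K : Set (EuclideanSpace ℝ (Fin n))) : Prop :=
  IsCompact K ∧ Convex ℝ K ∧ (interior K).Nonempty

/-- An ellipsoid: a nondegenerate affine image of the closed unit ball. -/
def IsEllipsoid {n : ℕ} (K : Set (EuclideanSpace ℝ (Fin n))) : Prop :=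
  ∃ f : EuclideanSpace ℝ (Fin n) ≃ᵃ[ℝ] EuclideanSpace ℝ (Fin n), K = f '' closedBall 0 1

/-- `K` has the strong intersection property relative to `O` and `S` with associated body `G`. -/
def StrongIntersectionProperty {n : ℕ} (O : EuclideanSpace ℝ (Fin n))
    (K S G : Set (EuclideanSpace ℝ (Fin n))) : Prop :=
  ∀ x ∈ frontier S, ∃ y ∈ frontier S, x ≠ y ∧ Collinear ℝ {x, O, y} ∧
    ∃ u : EuclideanSpace ℝ (Fin n), u ≠ 0 ∧
      supportCone K x ∩ supportCone K y = {p | ⟪u, p - O⟫ = 0} ∩ G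

/-- A (possibly non-symmetric) gauge function, comparable with the norm. -/
structure SGauge {E : Type*} [NormedAddCommGroup E] [NormedSpace ℝ E] (g : E → ℝ) : Prop where
  add : ∀ x y, g (x + y) ≤ g x + g y
  smul : ∀ (t : ℝ) x, 0 ≤ t → g (t • x) = t * g x
  lower : ∃ c > 0, ∀ x, c * ‖x‖ ≤ g x
  upper : ∃ C > 0, ∀ x, g x ≤ C * ‖x‖

section loop

variable {E : Type*} [NormedAddCommGroup E] [NormedSpace ℝ E]

lemma SGauge.nonneg {g : E → ℝ} (hg : SGauge g) (x : E) : 0 ≤ g x := by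
  obtain ⟨c, hc, h⟩ := hg.lower
  exact le_trans (by positivity) (h x)

lemma SGauge.continuous {g : E → ℝ} (hg : SGauge g) : Continuous g := by
  obtain ⟨C, hC, h⟩ := hg.upper
  have : LipschitzWith (Real.toNNReal C) g := by
    apply LipschitzWith.of_dist_le_mul
    intro x y
    rw [Real.dist_eq, dist_eq_norm, Real.coe_toNNReal _ hC.le, abs_sub_le_iff]
    have h1 := hg.add y (x - y)
    have h2 := hg.add x (y - x)
    have h3 := h (x - y)
    have h4 := h (y - x)
    rw [norm_sub_rev] at h4
    rw [add_sub_cancel] at h1 h2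
    constructor <;> linarith
  exact this.continuous

/-- rotating functional -/
def phi (α β : E →L[ℝ] ℝ) (t : ℝ) : E →L[ℝ] ℝ := Real.cos t • α + Real.sin t • β
/-- derivative of the rotating functional -/
def phi' (α β : E →L[ℝ] ℝ) (t : ℝ) : E →L[ℝ] ℝ := (-Real.sin t) • α + Real.cos t • β

/-- Iterated projections. -/
def loopMap (α β : E →L[ℝ] ℝ) (δ : ℝ) (u : ℕ → E) : ℕ → (E →L[ℝ] E)
  | 0 => ContinuousLinearMap.id ℝ E
  | k + 1 => (ContinuousLinearMap.id ℝ E -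
      (phi α β ((k + 1 : ℕ) * δ)).smulRight (u (k + 1))).comp (loopMap α β δ u k)

lemma loopMap_succ (α β : E →L[ℝ] ℝ) (δ : ℝ) (u : ℕ → E) (k : ℕ) (x : E) :
    loopMap α β δ u (k + 1) x = loopMap α β δ u k x -
      phi α β ((k + 1 : ℕ) * δ) (loopMap α β δ u k x) • u (k + 1) := rfl

lemma loop_contr {g : E → ℝ} (α β : E →L[ℝ] ℝ) (δ : ℝ) (u : ℕ → E)
    (hu : ∀ i x, g (x - phi α β ((i : ℕ) * δ) x • u i) ≤ g x) (k : ℕ) (x : E) :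
    g (loopMap α β δ u k x) ≤ g x := by
  induction k with
  | zero => exact le_rfl
  | succ k ih => rw [loopMap_succ]; exact (hu _ _).trans ih

lemma loop_fix (α β : E →L[ℝ] ℝ) (δ : ℝ) (u : ℕ → E) (k : ℕ) (x : E)
    (ha : α x = 0) (hb : β x = 0) : loopMap α β δ u k x = x := by
  induction k with
  | zero => rfl
  | succ k ih => rw [loopMap_succ, ih]; simp [phi, ha, hb]

lemma loop_phi (α β : E →L[ℝ] ℝ) (δ : ℝ) (u : ℕ → E)
    (hu : ∀ i : ℕ, phi α β (i * δ) (u i) = 1) (k : ℕ) (x : E) :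
    phi α β ((k + 1 : ℕ) * δ) (loopMap α β δ u (k + 1) x) = 0 := by
  rw [loopMap_succ, map_sub, map_smul, hu]; simp

lemma loop_phi0 (α β : E →L[ℝ] ℝ) (δ : ℝ) (u : ℕ → E)
    (hu : ∀ i : ℕ, phi α β (i * δ) (u i) = 1) (k : ℕ) (x : E) (hx : α x = 0) :
    phi α β ((k : ℕ) * δ) (loopMap α β δ u k x) = 0 := by
  cases k with
  | zero => simp [loopMap, phi, hx]
  | succ k => exact loop_phi α β δ u hu k x

lemma phi_add (α β : E →L[ℝ] ℝ) (s t : ℝ) (x : E) :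
    phi α β (s + t) x = Real.cos t * phi α β s x + Real.sin t * phi' α β s x := by
  simp [phi, phi', Real.cos_add, Real.sin_add]; ring

lemma phi'_add (α β : E →L[ℝ] ℝ) (s t : ℝ) (x : E) :
    phi' α β (s + t) x = -Real.sin t * phi α β s x + Real.cos t * phi' α β s x := by
  simp [phi, phi', Real.cos_add, Real.sin_add]; ring

lemma loop_phi' (α β : E →L[ℝ] ℝ) (δ : ℝ) (u : ℕ → E)
    (hu : ∀ i : ℕ, phi α β (i * δ) (u i) = 1) (k : ℕ) (x : E) (hx : α x = 0) :
    phi' α β ((k : ℕ) * δ) (loopMap α β δ u k x) =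
      (∏ i ∈ Finset.range k,
        (Real.cos δ - Real.sin δ * phi' α β ((i + 1 : ℕ) * δ) (u (i + 1)))) * β x := by
  induction k with
  | zero => simp [loopMap, phi']
  | succ k ih =>
    have h0 := loop_phi0 α β δ u hu k x hx
    rw [loopMap_succ, map_sub, map_smul, Finset.prod_range_succ]
    set y := loopMap α β δ u k x
    have e : ((k + 1 : ℕ) : ℝ) * δ = k * δ + δ := by push_cast; ring
    have h1 : phi' α β ((k + 1 : ℕ) * δ) y = Real.cos δ * phi' α β (k * δ) y := by
      rw [e, phi'_add, h0]; ring
    have h2 : phi α β ((k + 1 : ℕ) * δ) y = Real.sin δ * phi' α β (k * δ) y := by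
      rw [e, phi_add, h0]; ring
    rw [h1, h2, ih, smul_eq_mul]; ring

/-- The set of admissible contractions. -/
def adm (g : E → ℝ) (α β : E →L[ℝ] ℝ) : Set (E →L[ℝ] E) :=
  {T | (∀ x, g (T x) ≤ g x) ∧ (∀ x, α (T x) = 0) ∧ ∀ x, α x = 0 → β x = 0 → T x = x}

lemma adm_le {g : E → ℝ} (hg : SGauge g) {α β : E →L[ℝ] ℝ} {e : E} (hae : α e = 0)
    (hbe : β e = 1) {T : E →L[ℝ] E} (hT : T ∈ adm g α β) : |β (T e)| ≤ 1 := by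
  obtain ⟨h1, h2, h3⟩ := hT
  have key : ∀ x, α x = 0 → β (T x) = β (T e) * β x := by
    intro x hx
    have := h3 (x - β x • e) (by simp [hx, hae]) (by simp [hbe])
    have h4 := congrArg β this
    simp only [map_sub, map_smul, smul_eq_mul, hbe] at h4
    linarith
  have hk : ∀ k : ℕ, α ((T^[k]) e) = 0 ∧ β ((T^[k]) e) = β (T e) ^ k ∧ g ((T^[k]) e) ≤ g e := by
    intro k
    induction k with
    | zero => simp [hae, hbe]
    | succ k ih =>
      rw [Function.iterate_succ_apply']
      refine ⟨h2 _, ?_, (h1 _).trans ih.2.2⟩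
      rw [key _ ih.1, ih.2.1]; ring
  by_contra! hlt
  obtain ⟨c, hc, hl⟩ := hg.lower
  obtain ⟨k, hkk⟩ := pow_unbounded_of_one_lt (‖β‖ * (g e / c)) hlt
  have h5 := (hk k).2.2
  have h6 := hl ((T^[k]) e)
  have h7 : ‖(T^[k]) e‖ ≤ g e / c := by rw [le_div_iff₀ hc]; linarith
  have h8 := β.le_opNorm ((T^[k]) e)
  rw [(hk k).2.1, Real.norm_eq_abs, abs_pow] at h8
  have := mul_le_mul_of_nonneg_left h7 (norm_nonneg β)
  linarith

lemma adm_compact [FiniteDimensional ℝ E] {g : E → ℝ} (hg : SGauge g) (α β : E →L[ℝ] ℝ) :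
    IsCompact (adm g α β) := by
  apply Metric.isCompact_of_isClosed_isBounded
  · have hap : ∀ x : E, Continuous fun T : E →L[ℝ] E => T x := fun x => by fun_prop
    have : adm g α β = (⋂ x, {T | g (T x) ≤ g x}) ∩ ((⋂ x, {T | α (T x) = 0}) ∩
        ⋂ x, ⋂ (_ : α x = 0), ⋂ (_ : β x = 0), {T | T x = x}) := by
      ext T; simp [adm]
    rw [this]
    refine IsClosed.inter ?_ (IsClosed.inter ?_ ?_)
    · exact isClosed_iInter fun x => isClosed_le (hg.continuous.comp (hap x)) continuous_const
    · exact isClosed_iInter fun x => isClosed_eq (α.continuous.comp (hap x)) continuous_const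
    · exact isClosed_iInter fun x => isClosed_iInter fun _ => isClosed_iInter fun _ =>
        isClosed_eq (hap x) continuous_const
  · obtain ⟨c, hc, hl⟩ := hg.lower
    obtain ⟨C, hC, hu⟩ := hg.upper
    rw [isBounded_iff_forall_norm_le]
    refine ⟨C / c, fun T hT => ?_⟩
    refine T.opNorm_le_bound (by positivity) fun x => ?_
    have h1 := hT.1 x
    have h2 := hl (T x)
    have h3 := hu x
    rw [div_mul_eq_mul_div, le_div_iff₀ hc]
    linarith

lemma phi_pi_sub (α β : E →L[ℝ] ℝ) (t : ℝ) : phi α β (Real.pi - t) = - phi α β (-t) := by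
  ext x; simp [phi]; ring

lemma phi'_pi_sub (α β : E →L[ℝ] ℝ) (t : ℝ) : phi' α β (Real.pi - t) = - phi' α β (-t) := by
  ext x; simp [phi']; ring

lemma loop_main [FiniteDimensional ℝ E] {g : E → ℝ} (hg : SGauge g)
    (hproj : ∀ φ : E →L[ℝ] ℝ, φ ≠ 0 → ∃ v, φ v = 1 ∧ ∀ x, g (x - φ x • v) ≤ g x)
    (α β : E →L[ℝ] ℝ) (e1 e2 : E) (h11 : α e1 = 1) (h12 : α e2 = 0) (h21 : β e1 = 0)
    (h22 : β e2 = 1) :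
    ∃ T : E →L[ℝ] E, T ∈ adm g α β ∧ β (T e2) = -1 := by
  have hval : ∀ t, phi α β t (Real.cos t • e1 + Real.sin t • e2) = 1 := by
    intro t
    simp [phi, h11, h12, h21, h22]
    nlinarith [Real.sin_sq_add_cos_sq t]
  have hne : ∀ t, phi α β t ≠ 0 := by
    intro t h0
    have := hval t
    rw [h0] at this
    simp at this
  choose v hv1 hv2 using fun t => hproj (phi α β t) (hne t)
  -- bound on `a t`
  obtain ⟨A, hA0, hA⟩ : ∃ A : ℝ, 0 ≤ A ∧ ∀ t, |phi' α β t (v t)| ≤ A := by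
    obtain ⟨c, hc, hl⟩ := hg.lower
    obtain ⟨C, hC, hu⟩ := hg.upper
    set R := ‖e1‖ + ‖e2‖
    have hR : ∀ t, ‖Real.cos t • e1 + Real.sin t • e2‖ ≤ R := by
      intro t
      refine (norm_add_le _ _).trans ?_
      rw [norm_smul, norm_smul]
      have h1 := Real.abs_cos_le_one t
      have h2 := Real.abs_sin_le_one t
      exact add_le_add (mul_le_of_le_one_left (norm_nonneg _) h1)
        (mul_le_of_le_one_left (norm_nonneg _) h2)
    have hR0 : 0 ≤ R := by positivity
    have hvb : ∀ t, ‖v t‖ ≤ R + C * R / c := by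
      intro t
      set x := Real.cos t • e1 + Real.sin t • e2 with hx
      have h1 := hv2 t x
      rw [hval, one_smul] at h1
      have h2 := hl (x - v t)
      have h3 := hu x
      have h4 := hR t
      have h5 : ‖x - v t‖ ≤ C * R / c := by
        rw [le_div_iff₀ hc]
        have := mul_le_mul_of_nonneg_left h4 hC.le
        linarith
      have h6 : v t = x - (x - v t) := by abel
      rw [h6]
      exact (norm_sub_le _ _).trans (add_le_add h4 h5)
    refine ⟨(‖α‖ + ‖β‖) * (R + C * R / c), by positivity, fun t => ?_⟩
    have h1 : ‖phi' α β t‖ ≤ ‖α‖ + ‖β‖ := by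
      refine (norm_add_le _ _).trans ?_
      rw [norm_smul, norm_smul]
      have h1 := Real.abs_cos_le_one t
      have h2 := Real.abs_sin_le_one t
      rw [norm_neg]
      exact add_le_add (mul_le_of_le_one_left (norm_nonneg _) h2)
        (mul_le_of_le_one_left (norm_nonneg _) h1)
    exact ((phi' α β t).le_opNorm _).trans
      (mul_le_mul h1 (hvb t) (norm_nonneg _) (by positivity))
  set a : ℝ → ℝ := fun t => phi' α β t (v t) with ha
  -- the loops
  have hfwd : ∀ M : ℕ, ∃ T ∈ adm g α β, -β (T e2) = ∏ i ∈ Finset.range (M + 1),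
      (Real.cos (Real.pi / (M + 1)) - Real.sin (Real.pi / (M + 1)) *
        a ((i + 1 : ℕ) * (Real.pi / (M + 1)))) := by
    intro M
    set δ := Real.pi / ((M : ℝ) + 1) with hδ
    have hM : ((M : ℝ) + 1) ≠ 0 := by positivity
    have hpi : ((M + 1 : ℕ) : ℝ) * δ = Real.pi := by
      rw [hδ]; push_cast; field_simp
    set u : ℕ → E := fun i => v (i * δ) with hu
    have hu1 : ∀ i : ℕ, phi α β (i * δ) (u i) = 1 := fun i => hv1 _
    have hu2 : ∀ (i : ℕ) x, g (x - phi α β (i * δ) x • u i) ≤ g x := fun i => hv2 _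
    refine ⟨loopMap α β δ u (M + 1), ⟨loop_contr α β δ u hu2 _, ?_,
      fun x => loop_fix α β δ u _ x⟩, ?_⟩
    · intro x
      have := loop_phi α β δ u hu1 M x
      rw [hpi] at this
      simpa [phi] using this
    · have := loop_phi' α β δ u hu1 (M + 1) e2 h12
      rw [hpi, h22, mul_one] at this
      rw [← this]
      simp [phi']
  have hbwd : ∀ M : ℕ, ∃ T ∈ adm g α β, -β (T e2) = ∏ i ∈ Finset.range (M + 1),
      (Real.cos (Real.pi / (M + 1)) + Real.sin (Real.pi / (M + 1)) *
        a ((i : ℕ) * (Real.pi / (M + 1)))) := by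
    intro M
    set δ := Real.pi / ((M : ℝ) + 1) with hδ
    have hM : ((M : ℝ) + 1) ≠ 0 := by positivity
    have hpi : ((M + 1 : ℕ) : ℝ) * δ = Real.pi := by
      rw [hδ]; push_cast; field_simp
    have hpi' : ((M + 1 : ℕ) : ℝ) * (-δ) = -Real.pi := by
      rw [mul_neg, hpi]
    set u : ℕ → E := fun i => - v (Real.pi - i * δ) with hu
    have hph : ∀ i : ℕ, phi α β (i * (-δ)) = - phi α β (Real.pi - i * δ) := by
      intro i; rw [phi_pi_sub, neg_neg, mul_neg]
    have hph' : ∀ i : ℕ, phi' α β (i * (-δ)) = - phi' α β (Real.pi - i * δ) := by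
      intro i; rw [phi'_pi_sub, neg_neg, mul_neg]
    have hu1 : ∀ i : ℕ, phi α β (i * (-δ)) (u i) = 1 := fun i => by
      rw [hph]; simp [hu, hv1]
    have hu2 : ∀ (i : ℕ) x, g (x - phi α β (i * (-δ)) x • u i) ≤ g x := fun i x => by
      rw [hph]; simpa [hu] using hv2 (Real.pi - i * δ) x
    refine ⟨loopMap α β (-δ) u (M + 1), ⟨loop_contr α β (-δ) u hu2 _, ?_,
      fun x => loop_fix α β (-δ) u _ x⟩, ?_⟩
    · intro x
      have := loop_phi α β (-δ) u hu1 M x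
      rw [hpi'] at this
      simpa [phi] using this
    · have := loop_phi' α β (-δ) u hu1 (M + 1) e2 h12
      rw [hpi', h22, mul_one] at this
      rw [← Finset.prod_range_reflect]
      have e : -β ((loopMap α β (-δ) u (M + 1)) e2) =
          phi' α β (-Real.pi) ((loopMap α β (-δ) u (M + 1)) e2) := by simp [phi']
      rw [e, this]
      refine Finset.prod_congr rfl fun i hi => ?_
      rw [hph']
      have hi' : i ≤ M := by simpa [Nat.lt_succ_iff] using hi
      have e2 : Real.pi - ((i + 1 : ℕ) : ℝ) * δ = ((M + 1 - 1 - i : ℕ) : ℝ) * δ := by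
        rw [← hpi, Nat.add_sub_cancel, Nat.cast_sub hi']; push_cast; ring
      simp only [hu, e2, Real.cos_neg, Real.sin_neg, ha]
      simp
  -- maximise
  have hcomp := adm_compact hg α β
  obtain ⟨T0, hT0, -⟩ := hfwd 0
  obtain ⟨T, hT, hmax⟩ := hcomp.exists_isMaxOn ⟨T0, hT0⟩
    (f := fun T => -β (T e2)) (by fun_prop)
  refine ⟨T, hT, ?_⟩
  have hle := adm_le hg h12 h22 hT
  suffices h : 1 ≤ -β (T e2) by
    have := (abs_le.1 hle).1
    linarith
  -- lower bounds
  have hlow : ∀ᶠ M : ℕ in Filter.atTop,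
      (1 - (1 + A ^ 2) * Real.pi ^ 2 * (1 / ((M : ℝ) + 1))) *
        (Real.cos (Real.pi * (1 / (M + 1))) - Real.sin (Real.pi * (1 / (M + 1))) * A) ^ 2
        ≤ -β (T e2) := by
    have hlim : Filter.Tendsto (fun M : ℕ => 1 / ((M : ℝ) + 1)) Filter.atTop (nhds 0) :=
      tendsto_one_div_add_atTop_nhds_zero_nat
    have hpos1 : ∀ᶠ x : ℝ in nhds 0, 0 < Real.cos (Real.pi * x) - Real.sin (Real.pi * x) * A := by
      have hc : Continuous fun x : ℝ => Real.cos (Real.pi * x) - Real.sin (Real.pi * x) * A := by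
        fun_prop
      have := hc.tendsto 0
      simp only [mul_zero, Real.cos_zero, Real.sin_zero, zero_mul, sub_zero] at this
      exact this.eventually (lt_mem_nhds one_pos)
    have hpos2 : ∀ᶠ x : ℝ in nhds 0, (1 + A ^ 2) * Real.pi ^ 2 * x ^ 2 < 1 := by
      have hc : Continuous fun x : ℝ => (1 + A ^ 2) * Real.pi ^ 2 * x ^ 2 := by
        fun_prop
      have := hc.tendsto 0
      simp only [ne_eq, OfNat.ofNat_ne_zero, not_false_eq_true, zero_pow, mul_zero] at this
      exact this.eventually (gt_mem_nhds one_pos)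
    filter_upwards [hlim.eventually hpos1, hlim.eventually hpos2] with M hM1 hM2
    obtain ⟨T1, hT1, e1⟩ := hfwd M
    obtain ⟨T2, hT2, e2'⟩ := hbwd M
    have hm1 : -β (T1 e2) ≤ -β (T e2) := hmax hT1
    refine le_trans ?_ hm1
    have hb2 := (abs_le.1 (adm_le hg h12 h22 hT2)).1
    rw [mul_one_div Real.pi] at hM1 ⊢
    set δ := Real.pi / ((M : ℝ) + 1) with hδ
    have hMp : 0 < (M : ℝ) + 1 := by positivity
    have hδ0 : 0 ≤ δ := by positivity
    have hδpi : δ ≤ Real.pi := by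
      rw [hδ]; exact div_le_self Real.pi_pos.le (by linarith [(Nat.cast_nonneg M : (0:ℝ) ≤ M)])
    have hs0 : 0 ≤ Real.sin δ := Real.sin_nonneg_of_nonneg_of_le_pi hδ0 hδpi
    set c := Real.cos δ
    set s := Real.sin δ
    have hm : ∀ t, c - s * A ≤ c - s * a t := fun t => by
      have := mul_le_mul_of_nonneg_left (abs_le.1 (hA t)).2 hs0
      simp only [ha]; linarith
    have hp : ∀ t, c - s * A ≤ c + s * a t := fun t => by
      have := mul_le_mul_of_nonneg_left (abs_le.1 (hA t)).1 hs0
      simp only [ha]; linarith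
    have hpos : 0 < -β (T1 e2) := by
      rw [e1]; exact Finset.prod_pos fun i _ => hM1.trans_le (hm _)
    have hprod : (1 - (1 + A ^ 2) * Real.pi ^ 2 * (1 / ((M : ℝ) + 1))) * (c - s * A) ^ 2
        ≤ (-β (T1 e2)) * (-β (T2 e2)) := by
      rw [e1, e2', Finset.prod_range_succ, Finset.prod_range_succ']
      have hx : (∏ i ∈ Finset.range M, (c - s * a ((i + 1 : ℕ) * δ))) *
          ∏ i ∈ Finset.range M, (c + s * a ((i + 1 : ℕ) * δ)) ≥
          1 - (1 + A ^ 2) * Real.pi ^ 2 * (1 / ((M : ℝ) + 1)) := by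
        rw [← Finset.prod_mul_distrib]
        have hfac : ∀ i ∈ Finset.range M, 1 - (1 + A ^ 2) * δ ^ 2 ≤
            (c - s * a ((i + 1 : ℕ) * δ)) * (c + s * a ((i + 1 : ℕ) * δ)) := by
          intro i _
          have h1 : (a ((i + 1 : ℕ) * δ)) ^ 2 ≤ A ^ 2 := sq_le_sq' (abs_le.1 (hA _)).1 (abs_le.1 (hA _)).2
          have h2 : s ^ 2 ≤ δ ^ 2 := by
            have : s ≤ δ := Real.sin_le hδ0
            exact pow_le_pow_left₀ hs0 this 2
          have h3 : s ^ 2 + c ^ 2 = 1 := Real.sin_sq_add_cos_sq δ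
          have h4 := mul_le_mul_of_nonneg_left h1 (sq_nonneg s)
          have h5 := mul_le_mul_of_nonneg_right h2 (by positivity : 0 ≤ 1 + A ^ 2)
          nlinarith
        have hδ2 : (1 + A ^ 2) * δ ^ 2 = (1 + A ^ 2) * Real.pi ^ 2 * (1 / ((M : ℝ) + 1)) ^ 2 := by
          rw [hδ]; ring
        have hnn : 0 ≤ 1 - (1 + A ^ 2) * δ ^ 2 := by rw [hδ2]; linarith
        have hle := Finset.prod_le_prod (fun i _ => hnn) hfac
        rw [Finset.prod_const, Finset.card_range] at hle
        refine le_trans ?_ hle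
        have hb := one_add_mul_le_pow (a := -((1 + A ^ 2) * δ ^ 2)) (by linarith) M
        rw [← sub_eq_add_neg] at hb
        refine le_trans ?_ hb
        rw [hδ2]
        have : (M : ℝ) * (1 / ((M : ℝ) + 1)) ^ 2 ≤ 1 / ((M : ℝ) + 1) := by
          rw [div_pow, one_pow, mul_one_div, div_le_div_iff₀ (by positivity) (by positivity)]
          nlinarith
        have h9 := mul_le_mul_of_nonneg_left this (by positivity : 0 ≤ (1 + A ^ 2) * Real.pi ^ 2)
        linarith
      have hx0 : 0 ≤ (∏ i ∈ Finset.range M, (c - s * a ((i + 1 : ℕ) * δ))) *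
          ∏ i ∈ Finset.range M, (c + s * a ((i + 1 : ℕ) * δ)) :=
        mul_nonneg (Finset.prod_nonneg fun i _ => (hM1.trans_le (hm _)).le)
          (Finset.prod_nonneg fun i _ => (hM1.trans_le (hp _)).le)
      have hy : (c - s * A) ^ 2 ≤ (c - s * a ((M + 1 : ℕ) * δ)) * (c + s * a ((0 : ℕ) * δ)) := by
        rw [sq]
        exact mul_le_mul (hm _) (hp _) hM1.le (hM1.trans_le (hm _)).le
      calc _ ≤ _ := mul_le_mul hx hy (sq_nonneg _) hx0
        _ = _ := by ring
    nlinarith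
  have htend : Filter.Tendsto (fun M : ℕ =>
      (1 - (1 + A ^ 2) * Real.pi ^ 2 * (1 / ((M : ℝ) + 1))) *
        (Real.cos (Real.pi * (1 / (M + 1))) - Real.sin (Real.pi * (1 / (M + 1))) * A) ^ 2)
      Filter.atTop (nhds 1) := by
    have hlim : Filter.Tendsto (fun M : ℕ => 1 / ((M : ℝ) + 1)) Filter.atTop (nhds 0) :=
      tendsto_one_div_add_atTop_nhds_zero_nat
    have hc : Continuous fun x : ℝ => (1 - (1 + A ^ 2) * Real.pi ^ 2 * x) *
        (Real.cos (Real.pi * x) - Real.sin (Real.pi * x) * A) ^ 2 := by fun_prop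
    have := (hc.tendsto 0).comp hlim
    simpa [Function.comp_def] using this
  exact le_of_tendsto htend hlow

/-- The reflection. -/
lemma loop_refl [FiniteDimensional ℝ E] {g : E → ℝ} (hg : SGauge g)
    (hproj : ∀ φ : E →L[ℝ] ℝ, φ ≠ 0 → ∃ v, φ v = 1 ∧ ∀ x, g (x - φ x • v) ≤ g x)
    (α β : E →L[ℝ] ℝ) (e1 e2 : E) (h11 : α e1 = 1) (h12 : α e2 = 0) (h21 : β e1 = 0)
    (h22 : β e2 = 1) :
    ∃ T : E →L[ℝ] E, (∀ x, α (T x) = 0) ∧ (∀ x, α x = 0 → β x = 0 → T x = x) ∧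
      ∀ x, α x = 0 → β (T x) = -β x ∧ T (T x) = x ∧ g (T x) = g x := by
  obtain ⟨T, ⟨h1, h2, h3⟩, hT⟩ := loop_main hg hproj α β e1 e2 h11 h12 h21 h22
  refine ⟨T, h2, h3, fun x hx => ?_⟩
  have hb : β (T x) = -β x := by
    have := h3 (x - β x • e2) (by simp [hx, h12]) (by simp [h22])
    have h4 := congrArg β this
    simp only [map_sub, map_smul, smul_eq_mul, h22, hT] at h4
    linarith
  have hTT : T (T x) = x := by
    have := h3 (T x + x) (by simp [h2, hx]) (by simp [hb])
    rw [map_add, add_comm] at this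
    simpa [Function.comp_def] using this
  refine ⟨hb, hTT, le_antisymm (h1 x) ?_⟩
  have := h1 (T x)
  rwa [hTT] at this

end loop

section refl

open MeasureTheory

variable {H : Type*} [NormedAddCommGroup H] [InnerProductSpace ℝ H] [FiniteDimensional ℝ H]
  [MeasurableSpace H] [BorelSpace H]

/-- polar set -/
def polarSet (g : H → ℝ) : Set H := {w | ∀ x, ⟪w, x⟫ ≤ g x}

/-- invariant form -/
def polForm (g : H → ℝ) (x y : H) : ℝ := ∫ w in polarSet g, ⟪w, x⟫ * ⟪w, y⟫

lemma polarSet_ball {g : H → ℝ} (hg : SGauge g) : ∃ c > 0, ball (0 : H) c ⊆ polarSet g := by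
  obtain ⟨c, hc, hl⟩ := hg.lower
  refine ⟨c, hc, fun w hw x => ?_⟩
  rw [mem_ball_zero_iff] at hw
  have h1 := real_inner_le_norm w x
  have h2 := mul_le_mul_of_nonneg_right hw.le (norm_nonneg x)
  linarith [hl x]

lemma polarSet_compact {g : H → ℝ} (hg : SGauge g) : IsCompact (polarSet g) := by
  apply Metric.isCompact_of_isClosed_isBounded
  · have : polarSet g = ⋂ x, {w | ⟪w, x⟫ ≤ g x} := by ext; simp [polarSet]
    rw [this]
    exact isClosed_iInter fun x => isClosed_le (by fun_prop) continuous_const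
  · obtain ⟨C, hC, hu⟩ := hg.upper
    rw [isBounded_iff_forall_norm_le]
    refine ⟨C, fun w hw => ?_⟩
    have h1 := (hw w).trans (hu w)
    rw [real_inner_self_eq_norm_sq] at h1
    by_contra! hlt
    nlinarith

lemma polForm_int {g : H → ℝ} (hg : SGauge g) (x y : H) :
    IntegrableOn (fun w : H => ⟪w, x⟫ * ⟪w, y⟫) (polarSet g) := by
  apply ContinuousOn.integrableOn_compact (polarSet_compact hg)
  fun_prop

lemma polForm_symm (g : H → ℝ) (x y : H) : polForm g x y = polForm g y x := by
  simp [polForm, mul_comm]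

lemma polForm_add {g : H → ℝ} (hg : SGauge g) (x y z : H) :
    polForm g x (y + z) = polForm g x y + polForm g x z := by
  simp only [polForm, inner_add_right, mul_add]
  exact integral_add (polForm_int hg x y) (polForm_int hg x z)

lemma polForm_smul (g : H → ℝ) (x y : H) (t : ℝ) :
    polForm g x (t • y) = t * polForm g x y := by
  simp only [polForm, inner_smul_right, mul_left_comm _ t]
  exact integral_const_mul _ _

lemma polForm_pos {g : H → ℝ} (hg : SGauge g) (x : H) (hx : x ≠ 0) : 0 < polForm g x x := by
  unfold polForm
  rw [setIntegral_pos_iff_support_of_nonneg_ae _ (polForm_int hg x x)]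
  · obtain ⟨c, hc, hb⟩ := polarSet_ball hg
    have hop : IsOpen ({w : H | ⟪w, x⟫ ≠ 0} ∩ ball 0 c) :=
      IsOpen.inter (isOpen_ne_fun (by fun_prop) (by fun_prop)) isOpen_ball
    refine lt_of_lt_of_le (hop.measure_pos volume ?_) (measure_mono ?_)
    · have hn : 0 < ‖x‖ := norm_pos_iff.2 hx
      refine ⟨(c / 2 / ‖x‖) • x, ?_, ?_⟩
      · simp only [mem_setOf_eq, inner_smul_left, real_inner_self_eq_norm_sq]
        simp; exact ⟨hc.ne', hx⟩
      · rw [mem_ball_zero_iff, norm_smul, Real.norm_of_nonneg (by positivity)]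
        field_simp; linarith
    · rintro w ⟨h1, h2⟩
      exact ⟨mul_ne_zero h1 h1, hb h2⟩
  · exact Filter.Eventually.of_forall fun w => mul_self_nonneg _

lemma polForm_inv {g : H → ℝ} (T : H →ₗ[ℝ] H) (hT : ∀ x, T (T x) = x)
    (hgT : ∀ x, g (T x) = g x) (x y : H) : polForm g (T x) (T y) = polForm g x y := by
  set S := LinearMap.adjoint T with hS
  have hSin : ∀ w x, ⟪S w, x⟫ = ⟪w, T x⟫ := fun w x => LinearMap.adjoint_inner_left T x w
  have hSS : ∀ w, S (S w) = w := by
    intro w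
    refine ext_inner_right ℝ fun z => ?_
    rw [hSin, hSin, hT]
  have hcomp : S ∘ₗ S = LinearMap.id := LinearMap.ext hSS
  have hdet : LinearMap.det S * LinearMap.det S = 1 := by
    rw [← LinearMap.det_comp, hcomp, LinearMap.det_id]
  have hdet0 : LinearMap.det S ≠ 0 := by
    intro h0; rw [h0] at hdet; simp at hdet
  have habs : |(LinearMap.det S)⁻¹| = 1 := by
    rcases mul_self_eq_one_iff.1 hdet with h | h <;> simp [h]
  have hmap : Measure.map S (volume : Measure H) = volume := by
    rw [Measure.map_linearMap_addHaar_eq_smul_addHaar _ hdet0, habs]; simp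
  have hcont : Continuous S := S.continuous_of_finiteDimensional
  have hmp : MeasurePreserving S (volume : Measure H) volume := ⟨hcont.measurable, hmap⟩
  have hinj : Function.Injective S := fun a b hab => by
    rw [← hSS a, ← hSS b, hab]
  have hemb : MeasurableEmbedding S := hcont.measurableEmbedding hinj
  have hpre : S ⁻¹' polarSet g = polarSet g := by
    have h1 : ∀ w ∈ polarSet g, S w ∈ polarSet g := by
      intro w hw z
      rw [hSin, ← hgT z]; exact hw _
    ext w
    refine ⟨fun hw => ?_, fun hw => h1 w hw⟩
    have := h1 _ hw
    rwa [hSS] at this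
  have := hmp.setIntegral_preimage_emb hemb (fun w => ⟪w, x⟫ * ⟪w, y⟫) (polarSet g)
  rw [hpre] at this
  simp only [hSin] at this
  exact this

lemma polForm_eq {g : H → ℝ} (hg : SGauge g)
    (hr : ∀ b : H, b ≠ 0 → ∃ T : H →ₗ[ℝ] H, (∀ x, ⟪b, x⟫ = 0 → T x = x) ∧
      ∀ x, ⟪b, T x⟫ = -⟪b, x⟫ ∧ T (T x) = x ∧ g (T x) = g x)
    (x y : H) (hxy : polForm g x x = polForm g y y) : g x = g y := by
  by_cases hne : x = y
  · rw [hne]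
  set d := x - y with hd
  have hd0 : d ≠ 0 := sub_ne_zero.2 hne
  let φ : H →ₗ[ℝ] ℝ :=
    { toFun := fun z => polForm g d z
      map_add' := fun a b => polForm_add hg d a b
      map_smul' := fun t a => polForm_smul g d a t }
  set b := (InnerProductSpace.toDual ℝ H).symm (LinearMap.toContinuousLinearMap φ) with hb
  have hbin : ∀ z, ⟪b, z⟫ = polForm g d z := by
    intro z
    rw [hb, InnerProductSpace.toDual_symm_apply]; rfl
  have hb0 : b ≠ 0 := by
    intro h0
    have h1 := hbin d
    rw [h0, inner_zero_left] at h1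
    exact (polForm_pos hg d hd0).ne h1
  obtain ⟨T, hT1, hT2⟩ := hr b hb0
  have hinv := polForm_inv T (fun x => (hT2 x).2.1) (fun x => (hT2 x).2.2)
  have hTd : T d = -d := by
    have hf : ⟪b, T d + d⟫ = 0 := by rw [inner_add_right, (hT2 d).1]; ring
    have hTf := hT1 _ hf
    by_contra hcon
    have hf0 : T d + d ≠ 0 := fun h => hcon (eq_neg_of_add_eq_zero_left h)
    have h1 : polForm g (T d + d) (T d + d) =
        polForm g (T d + d) (T d) + polForm g (T d + d) d := polForm_add hg _ _ _
    have h2 : polForm g (T d + d) (T d) = polForm g (T d + d) d := by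
      conv_lhs => rw [← hTf]
      exact hinv _ _
    have h3 : polForm g (T d + d) d = 0 := by rw [polForm_symm, ← hbin]; exact hf
    have := polForm_pos hg _ hf0
    linarith
  have hs : T (x + y) = x + y := by
    apply hT1
    rw [hbin, polForm_symm, hd, sub_eq_add_neg, polForm_add hg, ← neg_one_smul ℝ y, polForm_smul,
      polForm_symm g (x + y) x, polForm_symm g (x + y) y, polForm_add hg, polForm_add hg,
      polForm_symm g y x]
    linarith
  have hTx : T x = y := by
    rw [hd, map_sub] at hTd
    rw [map_add] at hs
    have : (2 : ℝ) • T x = (2 : ℝ) • y := by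
      rw [two_smul, two_smul]
      calc T x + T x = (T x - T y) + (T x + T y) := by abel
        _ = y + y := by rw [hTd, hs]; abel
    exact smul_right_injective H (two_ne_zero) this
  rw [← hTx, (hT2 x).2.2]

lemma refl_parallelogram {g : H → ℝ} (hg : SGauge g)
    (hr : ∀ b : H, b ≠ 0 → ∃ T : H →ₗ[ℝ] H, (∀ x, ⟪b, x⟫ = 0 → T x = x) ∧
      ∀ x, ⟪b, T x⟫ = -⟪b, x⟫ ∧ T (T x) = x ∧ g (T x) = g x)
    (x y : H) : g (-x) = g x ∧
      g (x + y) * g (x + y) + g (x - y) * g (x - y) = 2 * (g x * g x + g y * g y) := by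
  have heq := polForm_eq hg hr
  have hss : ∀ (t : ℝ) z, polForm g (t • z) (t • z) = t ^ 2 * polForm g z z := by
    intro t z
    rw [polForm_smul, polForm_symm, polForm_smul]; ring
  have hg0 : g 0 = 0 := by have := hg.smul 0 0 le_rfl; simpa using this
  have hB0 : polForm g 0 0 = 0 := by have := hss 0 0; simpa using this
  obtain ⟨k, hk⟩ : ∃ k, ∀ z, g z * g z = k * polForm g z z := by
    by_cases hall : ∀ z : H, z = 0
    · exact ⟨0, fun z => by rw [hall z, hg0]; ring⟩
    push Not at hall
    obtain ⟨x0, hx0⟩ := hall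
    have hp0 := polForm_pos hg x0 hx0
    refine ⟨g x0 * g x0 / polForm g x0 x0, fun z => ?_⟩
    have hz0 : 0 ≤ polForm g z z := by
      by_cases hz : z = 0
      · rw [hz, hB0]
      · exact (polForm_pos hg z hz).le
    set r := Real.sqrt (polForm g z z / polForm g x0 x0) with hr
    have hr2 : r ^ 2 = polForm g z z / polForm g x0 x0 := Real.sq_sqrt (by positivity)
    have h1 : g z = g (r • x0) := by
      apply heq
      rw [hss, hr2]; field_simp
    rw [h1, hg.smul _ _ (Real.sqrt_nonneg _)]
    calc r * g x0 * (r * g x0) = r ^ 2 * (g x0 * g x0) := by ring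
      _ = _ := by rw [hr2]; ring
  constructor
  · apply heq
    rw [← neg_one_smul ℝ x, hss]; ring
  · rw [hk, hk, hk, hk, sub_eq_add_neg, ← neg_one_smul ℝ y, polForm_add hg, polForm_add hg,
      polForm_smul, polForm_symm g (x + y) x, polForm_symm g (x + y) y,
      polForm_symm g (x + _) x, polForm_symm g (x + _) y]
    simp only [polForm_add hg, polForm_smul]
    rw [polForm_symm g y x]
    ring

end refl

section glob

variable {E : Type*} [NormedAddCommGroup E] [InnerProductSpace ℝ E] [FiniteDimensional ℝ E]

lemma glob_parallelogram (hdim : 3 ≤ Module.finrank ℝ E) {g : E → ℝ} (hg : SGauge g)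
    (hproj : ∀ φ : E →L[ℝ] ℝ, φ ≠ 0 → ∃ v, φ v = 1 ∧ ∀ x, g (x - φ x • v) ≤ g x)
    (x y : E) : g (-x) = g x ∧
      g (x + y) * g (x + y) + g (x - y) * g (x - y) = 2 * (g x * g x + g y * g y) := by
  classical
  obtain ⟨u, hu0, hux, huy⟩ : ∃ u : E, u ≠ 0 ∧ ⟪u, x⟫ = 0 ∧ ⟪u, y⟫ = 0 := by
    have hlt : Module.finrank ℝ (Submodule.span ℝ ({x, y} : Set E)) < Module.finrank ℝ E := by
      have h1 := finrank_span_finset_le_card (R := ℝ) ({x, y} : Finset E)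
      have h2 := Finset.card_le_two (a := x) (b := y)
      rw [Finset.coe_pair] at h1
      unfold Set.finrank at h1
      omega
    have hne : (Submodule.span ℝ ({x, y} : Set E))ᗮ ≠ ⊥ := by
      intro h0
      rw [Submodule.orthogonal_eq_bot_iff] at h0
      rw [h0, finrank_top] at hlt
      exact lt_irrefl _ hlt
    obtain ⟨u, hu, hu0⟩ := Submodule.exists_mem_ne_zero_of_ne_bot hne
    rw [Submodule.mem_orthogonal'] at hu
    exact ⟨u, hu0, hu x (Submodule.subset_span (by simp)), hu y (Submodule.subset_span (by simp))⟩
  set α := innerSL ℝ u with hα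
  have hαx : ∀ z, α z = ⟪u, z⟫ := fun z => rfl
  let H : Submodule ℝ E := LinearMap.ker α.toLinearMap
  have hH : ∀ z, z ∈ H ↔ ⟪u, z⟫ = 0 := fun z => Iff.rfl
  letI : MeasurableSpace H := borel H
  haveI : BorelSpace H := ⟨rfl⟩
  let gH : H → ℝ := fun z => g z
  have hgH : SGauge gH := by
    refine ⟨fun a b => hg.add a b, fun t a ht => hg.smul t a ht, ?_, ?_⟩
    · obtain ⟨c, hc, h⟩ := hg.lower
      exact ⟨c, hc, fun z => h z⟩
    · obtain ⟨c, hc, h⟩ := hg.upper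
      exact ⟨c, hc, fun z => h z⟩
  have hr : ∀ b : H, b ≠ 0 → ∃ T : H →ₗ[ℝ] H, (∀ x, ⟪b, x⟫ = 0 → T x = x) ∧
      ∀ x, ⟪b, T x⟫ = -⟪b, x⟫ ∧ T (T x) = x ∧ gH (T x) = gH x := by
    intro b hb
    have hb0 : (b : E) ≠ 0 := fun h => hb (Subtype.ext h)
    have hub : ⟪u, (b : E)⟫ = 0 := (hH _).1 b.2
    have hbu : ⟪(b : E), u⟫ = 0 := by rw [real_inner_comm]; exact hub
    have huu : ⟪u, u⟫ ≠ 0 := inner_self_ne_zero.2 hu0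
    have hbb : ⟪(b : E), (b : E)⟫ ≠ 0 := inner_self_ne_zero.2 hb0
    obtain ⟨T, h1, h2, h3⟩ := loop_refl hg hproj α (innerSL ℝ (b : E))
      ((⟪u, u⟫)⁻¹ • u) ((⟪(b : E), (b : E)⟫)⁻¹ • (b : E))
      (by rw [hαx, inner_smul_right, inv_mul_cancel₀ huu])
      (by rw [hαx, inner_smul_right, hub, mul_zero])
      (by rw [innerSL_apply_apply, inner_smul_right, hbu, mul_zero])
      (by rw [innerSL_apply_apply, inner_smul_right, inv_mul_cancel₀ hbb])
    refine ⟨T.toLinearMap.restrict (p := H) (q := H) (fun z _ => h1 z), fun z hz => ?_,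
      fun z => ?_⟩
    · exact Subtype.ext (h2 z z.2 hz)
    · obtain ⟨h4, h5, h6⟩ := h3 z z.2
      exact ⟨h4, Subtype.ext h5, h6⟩
  exact refl_parallelogram hgH hr ⟨x, hux⟩ ⟨y, huy⟩

end glob

lemma exists_equiv_of_parallelogram {E : Type*} [AddCommGroup E] [Module ℝ E]
    [FiniteDimensional ℝ E] {n : ℕ} (hn : Module.finrank ℝ E = n) (g : E → ℝ)
    (h0 : ∀ x, 0 ≤ g x) (hz : ∀ x, g x = 0 ↔ x = 0) (hadd : ∀ x y, g (x + y) ≤ g x + g y)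
    (hs : ∀ (t : ℝ) x, g (t • x) = |t| * g x)
    (hp : ∀ x y, g (x + y) * g (x + y) + g (x - y) * g (x - y) = 2 * (g x * g x + g y * g y)) :
    ∃ L : E ≃ₗ[ℝ] EuclideanSpace ℝ (Fin n), ∀ x, g x = ‖L x‖ := by
  letI : Norm E := ⟨g⟩
  have core : NormedSpace.Core ℝ E :=
    { norm_nonneg := h0, norm_smul := hs, norm_triangle := hadd, norm_eq_zero_iff := hz }
  letI : NormedAddCommGroup E := NormedAddCommGroup.ofCore core
  letI : NormedSpace ℝ E := NormedSpace.ofCore core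
  let _ : InnerProductSpace ℝ E := InnerProductSpace.ofNorm ℝ hp
  let b := (stdOrthonormalBasis ℝ E).reindex (finCongr hn)
  exact ⟨b.repr.toLinearEquiv, fun x => (b.repr.norm_map x).symm⟩

/-- Kakutani-type characterization: if for every hyperplane `Λ` through a fixed interior
point `O` there is a line direction `v` such that `Λ ∩ bd K` lies in the shadow boundary
of `K` in the direction `v`, then `K` is an ellipsoid. -/
theorem stmt17 {n : ℕ} (hn : 3 ≤ n) (K : Set (EuclideanSpace ℝ (Fin n)))
    (hK : IsConvexBody K) (O : EuclideanSpace ℝ (Fin n)) (hO : O ∈ interior K)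
    (h : ∀ u : EuclideanSpace ℝ (Fin n), u ≠ 0 →
      ∃ v : EuclideanSpace ℝ (Fin n), v ≠ 0 ∧
        ∀ p ∈ {p : EuclideanSpace ℝ (Fin n) | ⟪u, p - O⟫ = 0} ∩ frontier K,
          ∃ w : EuclideanSpace ℝ (Fin n), w ≠ 0 ∧
            (∀ z ∈ K, ⟪w, z⟫ ≤ ⟪w, p⟫) ∧ ⟪w, v⟫ = 0) :
    IsEllipsoid K := by
  obtain ⟨hcomp, hconv, -⟩ := hK
  let e : EuclideanSpace ℝ (Fin n) ≃ₜ EuclideanSpace ℝ (Fin n) := Homeomorph.addLeft O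
  set C : Set (EuclideanSpace ℝ (Fin n)) := e ⁻¹' K with hC
  have hmem : ∀ z, z ∈ C ↔ O + z ∈ K := fun z => Iff.rfl
  have hCconv : Convex ℝ C := hconv.translate_preimage_right O
  have hCcomp : IsCompact C := e.isCompact_preimage.2 hcomp
  have hfr : ∀ z, z ∈ frontier C ↔ O + z ∈ frontier K := by
    intro z
    rw [hC, ← e.preimage_frontier]; rfl
  have hC0 : C ∈ nhds (0 : EuclideanSpace ℝ (Fin n)) := by
    rw [mem_interior_iff_mem_nhds] at hO
    exact e.continuous.continuousAt.preimage_mem_nhds (by simpa [e] using hO)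
  have hCabs : Absorbent ℝ C := absorbent_nhds_zero hC0
  set g : EuclideanSpace ℝ (Fin n) → ℝ := gauge C with hgdef
  obtain ⟨r, hr, hball⟩ := Metric.mem_nhds_iff.1 hC0
  have hg : SGauge g := by
    refine ⟨gauge_add_le hCconv hCabs, fun t x ht => by
      rw [hgdef, gauge_smul_of_nonneg ht, smul_eq_mul], ?_, ?_⟩
    · obtain ⟨R, hR⟩ := hCcomp.isBounded.subset_closedBall 0
      have hsub : C ⊆ closedBall 0 (max R 1) :=
        hR.trans (closedBall_subset_closedBall (le_max_left _ _))
      have hp : 0 < max R 1 := lt_max_of_lt_right one_pos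
      refine ⟨(max R 1)⁻¹, inv_pos.2 hp, fun x => ?_⟩
      have := le_gauge_of_subset_closedBall (x := x) hCabs hp.le hsub
      rwa [div_eq_inv_mul] at this
    · refine ⟨r⁻¹, inv_pos.2 hr, fun x => ?_⟩
      have := mul_gauge_le_norm (x := x) hball
      rw [inv_mul_eq_div, le_div_iff₀ hr, mul_comm]
      exact this
  have hgpos : ∀ x, x ≠ 0 → 0 < g x := by
    intro x hx
    obtain ⟨c, hc, hl⟩ := hg.lower
    exact lt_of_lt_of_le (mul_pos hc (norm_pos_iff.2 hx)) (hl x)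
  have hg0 : g 0 = 0 := gauge_zero
  have hgle : ∀ x, g x ≤ 1 ↔ O + x ∈ K := by
    intro x
    rw [hgdef, gauge_le_one_iff_mem_closure hCconv hC0, hCcomp.isClosed.closure_eq, hmem]
  -- support at normalised points
  have hsupp : ∀ u v : EuclideanSpace ℝ (Fin n), (∀ p ∈ {p : EuclideanSpace ℝ (Fin n) | ⟪u, p - O⟫ = 0} ∩ frontier K,
          ∃ w : EuclideanSpace ℝ (Fin n), w ≠ 0 ∧
            (∀ z ∈ K, ⟪w, z⟫ ≤ ⟪w, p⟫) ∧ ⟪w, v⟫ = 0) → ∀ x, x ≠ 0 → ⟪u, x⟫ = 0 →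
      ∃ w, ⟪w, v⟫ = 0 ∧ 0 < ⟪w, x⟫ ∧ ∀ z, ⟪w, z⟫ * g x ≤ ⟪w, x⟫ * g z := by
    intro u v huv x hx hux
    have hgx := hgpos x hx
    obtain ⟨w, hw0, hw1, hw2⟩ := huv (O + (g x)⁻¹ • x) ⟨by
      simp [inner_smul_right, hux], by
      rw [← hfr, ← gauge_eq_one_iff_mem_frontier hCconv hC0]
      change g _ = 1
      rw [hg.smul _ _ (inv_pos.2 hgx).le, inv_mul_cancel₀ hgx.ne']⟩
    have hz1 : ∀ z, g z ≤ 1 → ⟪w, z⟫ * g x ≤ ⟪w, x⟫ := by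
      intro z hz
      have := hw1 _ ((hgle z).1 hz)
      rw [inner_add_right, inner_add_right, inner_smul_right] at this
      have h2 : ⟪w, z⟫ ≤ (g x)⁻¹ * ⟪w, x⟫ := by linarith
      rwa [inv_mul_eq_div, le_div_iff₀ hgx] at h2
    have hz2 : ∀ z, ⟪w, z⟫ * g x ≤ ⟪w, x⟫ * g z := by
      intro z
      by_cases hz : z = 0
      · simp [hz, hg0]
      have hgz := hgpos z hz
      have := hz1 ((g z)⁻¹ • z) (by
        rw [hg.smul _ _ (inv_pos.2 hgz).le, inv_mul_cancel₀ hgz.ne'])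
      rw [inner_smul_right, mul_assoc, inv_mul_eq_div, div_le_iff₀ hgz] at this
      exact this
    refine ⟨w, hw2, ?_, hz2⟩
    have h1 := hz2 w
    have h2 : 0 < ⟪w, w⟫ := real_inner_self_pos.2 hw0
    have h3 := hgpos w hw0
    have h4 : 0 < ⟪w, x⟫ * g w := lt_of_lt_of_le (mul_pos h2 hgx) h1
    exact pos_of_mul_pos_left h4 h3.le
  have hproj : ∀ φ : EuclideanSpace ℝ (Fin n) →L[ℝ] ℝ, φ ≠ 0 →
      ∃ v, φ v = 1 ∧ ∀ x, g (x - φ x • v) ≤ g x := by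
    intro φ hφ
    set u := (InnerProductSpace.toDual ℝ _).symm φ with hu
    have hin : ∀ z, ⟪u, z⟫ = φ z := fun z => by
      rw [hu, InnerProductSpace.toDual_symm_apply]
    have hu0 : u ≠ 0 := by
      intro h0; apply hφ; ext z; rw [← hin, h0]; simp
    obtain ⟨v, hv0, hv⟩ := h u hu0
    have hs := hsupp u v hv
    have huv : φ v ≠ 0 := by
      intro h0
      obtain ⟨w, h1, h2, -⟩ := hs v hv0 (by rw [hin, h0])
      linarith
    refine ⟨(φ v)⁻¹ • v, by simp [huv], fun x => ?_⟩
    set y := x - φ x • (φ v)⁻¹ • v with hy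
    by_cases hy0 : y = 0
    · rw [hy0, hg0]; exact hg.nonneg x
    obtain ⟨w, h1, h2, h3⟩ := hs y hy0 (by rw [hin, hy]; simp [huv])
    have h4 := h3 x
    have h5 : ⟪w, y⟫ = ⟪w, x⟫ := by
      rw [hy, inner_sub_right, inner_smul_right, inner_smul_right, h1]; simp
    rw [← h5] at h4
    exact le_of_mul_le_mul_left h4 h2
  have hpar := glob_parallelogram (by simpa using hn) hg hproj
  have hneg : ∀ x, g (-x) = g x := fun x => (hpar x x).1
  obtain ⟨L, hL⟩ := exists_equiv_of_parallelogram (n := n) (by simp) g hg.nonneg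
    (fun x => ⟨fun hx => by
      by_contra h0
      exact (hgpos x h0).ne' hx, fun hx => by rw [hx, hg0]⟩) hg.add
    (fun t x => by
      rcases le_total 0 t with ht | ht
      · rw [hg.smul t x ht, abs_of_nonneg ht]
      · rw [← hneg, ← neg_smul, hg.smul _ x (neg_nonneg.2 ht), abs_of_nonpos ht])
    (fun x y => (hpar x y).2)
  refine ⟨L.symm.toAffineEquiv.trans (AffineEquiv.constVAdd ℝ _ O), ?_⟩
  ext z
  simp only [Set.mem_image, mem_closedBall_zero_iff]
  constructor
  · intro hz
    refine ⟨L (z - O), ?_, ?_⟩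
    · rw [← hL, hgle]; simpa using hz
    · simp
  · rintro ⟨y, hy, rfl⟩
    have : g (L.symm y) ≤ 1 := by rw [hL]; simpa using hy
    rw [hgle] at this
    simpa using this
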